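/- Let F_d be a non-abelian free group of rank d ≥ 2 and let g₁,…,g_m be non-trivial elements of F_d. Then for all but finitely many natural numbers q, the group G = F_d/⟨⟨g₁^q,…,g_m^q⟩⟩ has residual deficiency greater than one, where ⟨⟨·⟩⟩ denotes normal closure in F_d. -/

import Mathlib

/-!
Write `g i = u i ^ e i` with `u i` not a proper power. The presentation of the quotient `G` with `d`
generators and relators `u i ^ (e i * q)` has value `d - ∑ 1 / k i`, where `k i` is the order of
`u i` modulo the finite residual, and this exceeds one as soon as every `k i` is larger than `m`.
Since `rdef` is a real supremum, one also has to bound the values of all presentations of `G`.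

*Orders.* A word with syllables `x_{i₁}^{e₁} ⋯ x_{iᵣ}^{eᵣ}` is detected by the representation in
unipotent integral matrices of size `N = r + 1` which sends a generator `x` to `1 + X`, where `X`
has its ones at the places `(a, a + 1)` at which the `a`-th syllable is a power of `x`: then
`X ^ 2 = 0` and the upper right entry of the image of the word is the product of the exponents
(`magnus_prod_apply`). Modulo `M = q / gcd (q, N!)` all unipotent matrices have order dividing
`q`, because `M` divides `choose q j` for `0 < j < N`. As `M` grows with `q`, a given word survives
for all large `q` in a finite quotient of exponent dividing `q` (`exists_finite_quotient`). Applied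
to the powers `u i ^ j` with `1 ≤ j ≤ m` this makes the `k i` large. It also bounds the exponents
of the roots of an element, whence the existence of `u i` and the absence of torsion.

*Boundedness.* Let a `d`-generated group have a presentation with `n` generators and relators
`u i ^ m i`, and let `K` be a finite quotient in which every `u i` has its order `k i` modulo the
finite residual. Derivations of the free group on `n` letters into the regular representation
`K → ℚ` form a space of dimension `n * |K|`. The value at `u i ^ m i` is fixed by `u i`, so it lies
in a space of dimension `|K| / k i`, and a derivation vanishing on the relators is determined by its
values at `d` elements. Hence `n ≤ d + ∑ 1 / k i` (`rank_sub_le`, `rdef_le`).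
-/

open scoped Classical ENNReal

namespace ResDef

variable {G : Type*} [Group G]

/-- The order of the image of `x` in `G ⧸ H`: the least positive `j` with `x ^ j ∈ H`,
or `0` if there is no such `j`. -/
noncomputable def orderIn (H : Subgroup G) (x : G) : ℕ :=
  sInf {j : ℕ | 0 < j ∧ x ^ j ∈ H}

/-- The finite residual: the intersection of all finite index subgroups. -/
def finiteResidual (G : Type*) [Group G] : Subgroup G :=
  ⨅ (H : Subgroup G) (_ : H.index ≠ 0), H

/-- An element of a free group is not a proper power. -/
def NotProperPower {α : Type*} (u : FreeGroup α) : Prop :=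
  ∀ (v : FreeGroup α) (k : ℕ), u = v ^ k → k = 1

/-- `G` admits a finite presentation. -/
def FinitelyPresentedGroup (G : Type*) [Group G] : Prop :=
  ∃ (n : ℕ) (R : Finset (FreeGroup (Fin n))) (φ : FreeGroup (Fin n) →* G),
    Function.Surjective φ ∧ φ.ker = Subgroup.normalClosure (R : Set (FreeGroup (Fin n)))

/-- The deficiency of a finitely presented group. -/
noncomputable def deficiency (G : Type*) [Group G] : ℝ :=
  sSup {x : ℝ | ∃ (n : ℕ) (R : Finset (FreeGroup (Fin n))) (φ : FreeGroup (Fin n) →* G),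
    Function.Surjective φ ∧ φ.ker = Subgroup.normalClosure (R : Set (FreeGroup (Fin n))) ∧
    x = (n : ℝ) - (R.card : ℝ)}

/-- The residual deficiency of a finitely presented group. -/
noncomputable def rdef (G : Type*) [Group G] : ℝ :=
  sSup {x : ℝ | ∃ (n s : ℕ) (u : Fin s → FreeGroup (Fin n)) (m : Fin s → ℕ)
    (φ : FreeGroup (Fin n) →* G),
    (∀ i, 1 ≤ m i) ∧ (∀ i, NotProperPower (u i)) ∧ Function.Surjective φ ∧
    φ.ker = Subgroup.normalClosure (Set.range fun i => u i ^ m i) ∧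
    x = (n : ℝ) - ∑ i, ((orderIn (finiteResidual G) (φ (u i)) : ℝ))⁻¹}

/-- The deficiency gradient. -/
noncomputable def DG (G : Type*) [Group G] : ℝ :=
  sSup {x : ℝ | ∃ H : Subgroup G, H.index ≠ 0 ∧
    x = (deficiency H - 1) / (H.index : ℝ)}

/-- `ν_p(r)`: the largest `k` such that `r = s ^ (p ^ k)` for some `s`. -/
noncomputable def nuP (p : ℕ) {α : Type*} (r : FreeGroup α) : ℕ :=
  sSup {k : ℕ | ∃ s : FreeGroup α, r = s ^ (p ^ k)}

/-- The `p`-deficiency of a group. -/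
noncomputable def defP (p : ℕ) (G : Type*) [Group G] : ℝ :=
  sSup {x : ℝ | ∃ (n : ℕ) (R : Set (FreeGroup (Fin n))) (φ : FreeGroup (Fin n) →* G),
    Function.Surjective φ ∧ φ.ker = Subgroup.normalClosure R ∧
    Summable (fun r : R => ((p : ℝ) ^ (nuP p r.1))⁻¹) ∧
    x = (n : ℝ) - ∑' r : R, ((p : ℝ) ^ (nuP p r.1))⁻¹}

/-- The `p`-deficiency gradient. -/
noncomputable def DGp (p : ℕ) (G : Type*) [Group G] : ℝ :=
  sSup {x : ℝ | ∃ H : Subgroup G, H.Normal ∧ H.index ≠ 0 ∧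
    x = (defP p H - 1) / (H.index : ℝ)}

/-- The rank (minimal number of generators) of a group. -/
noncomputable def grpRank (G : Type*) [Group G] : ℕ :=
  sInf {n : ℕ | ∃ S : Finset G, S.card = n ∧ Subgroup.closure (S : Set G) = ⊤}

/-- The rank gradient. -/
noncomputable def RG (G : Type*) [Group G] : ℝ :=
  sInf {x : ℝ | ∃ H : Subgroup G, H.index ≠ 0 ∧
    x = ((grpRank H : ℝ) - 1) / (H.index : ℝ)}

/-- The `p`-rank: the largest `n` such that `G` surjects onto `(C_p)^n`. -/
noncomputable def pRank (p : ℕ) (G : Type*) [Group G] : ℕ :=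
  sSup {n : ℕ | ∃ f : G →* (Fin n → Multiplicative (ZMod p)), Function.Surjective f}

/-- The `p`-rank gradient. -/
noncomputable def RGp (p : ℕ) (G : Type*) [Group G] : ℝ :=
  sInf {x : ℝ | ∃ H : Subgroup G, H.Normal ∧ H.index ≠ 0 ∧
    x = ((pRank p H : ℝ) - 1) / (H.index : ℝ)}

/-- `G` is large: some finite index subgroup surjects onto a free group of rank 2. -/
def Large (G : Type*) [Group G] : Prop :=
  ∃ H : Subgroup G, H.index ≠ 0 ∧ ∃ f : H →* FreeGroup (Fin 2), Function.Surjective f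

/-- The first Betti number: the largest `n` such that `G` surjects onto `ℤ^n`. -/
noncomputable def firstBetti (G : Type*) [Group G] : ℕ :=
  sSup {n : ℕ | ∃ f : G →* Multiplicative (Fin n → ℤ), Function.Surjective f}

/-- The order of the image of `x` in `G ⧸ H`, as an extended natural number. -/
noncomputable def orderInE (H : Subgroup G) (x : G) : ℕ∞ :=
  if orderIn H x = 0 then ⊤ else (orderIn H x : ℕ∞)

/-- `ν(g; G, K)` from the paper, valued in `ℕ∞`. -/
noncomputable def nu (K : Subgroup G) (g : G) : ℕ∞ :=
  if g ∈ K then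
    sSup ((fun a : G => orderInE K a) '' {a : G | ∃ n : ℤ, a ^ n = g})
  else
    sSup ((fun q : G × ℤ => (q.2.natAbs : ℕ∞)) '' {q : G × ℤ | q.2 ≠ 0 ∧ q.1 ^ q.2 = g})

/-- The relative size `ν(g;G,K)⁻¹` of an element (`0` if `ν` is infinite). -/
noncomputable def relsizeElem (K : Subgroup G) (g : G) : ℝ :=
  (((nu K g).toNat : ℝ))⁻¹

/-- The relative size of a finite set. -/
noncomputable def relsizeFinset (K : Subgroup G) (S : Finset G) : ℝ :=
  ∑ g ∈ S, relsizeElem K g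

/-- The relative size of a normal subgroup `M`, finitely generated as a normal subgroup. -/
noncomputable def relsizeSubgroup (K M : Subgroup G) : ℝ :=
  sInf {x : ℝ | ∃ S : Finset G, Subgroup.normalClosure (S : Set G) = M ∧
    x = relsizeFinset K S}

/-- `a` is a minimal root of `g` in `G` with respect to `K`. -/
def IsMinimalRoot (K : Subgroup G) (g a : G) : Prop :=
  (g ∈ K ∧ (∃ n : ℤ, a ^ n = g) ∧ ((orderIn K a : ℕ∞) = nu K g)) ∨
  (g ∉ K ∧ ∃ m : ℕ, (m : ℕ∞) = nu K g ∧ a ^ m = g)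

/-! ### Integral unipotent representations of free groups -/

/-- Every element is a product of non-zero powers of generators, consecutive ones belonging to
distinct generators. -/
theorem exists_syllables {α : Type*} (w : FreeGroup α) :
    ∃ L : List (α × ℤ), L.IsChain (fun x y => x.1 ≠ y.1) ∧ (∀ x ∈ L, x.2 ≠ 0) ∧
      (L.map fun x => FreeGroup.of x.1 ^ x.2).prod = w := by
  have key : ∀ (i : α) (e : ℤ) (v : FreeGroup α),
      (∃ L : List (α × ℤ), L.IsChain (fun x y => x.1 ≠ y.1) ∧ (∀ x ∈ L, x.2 ≠ 0) ∧
        (L.map fun x => FreeGroup.of x.1 ^ x.2).prod = v) →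
      ∃ L : List (α × ℤ), L.IsChain (fun x y => x.1 ≠ y.1) ∧ (∀ x ∈ L, x.2 ≠ 0) ∧
        (L.map fun x => FreeGroup.of x.1 ^ x.2).prod = FreeGroup.of i ^ e * v := by
    rintro i e v ⟨L, hc, h0, rfl⟩
    by_cases he : e = 0
    · exact ⟨L, hc, h0, by simp [he]⟩
    match L, hc, h0 with
    | [], _, _ => exact ⟨[(i, e)], by simp, by simpa using he, by simp⟩
    | (j, k) :: L, hc, h0 =>
      by_cases hij : i = j
      · subst hij
        by_cases hs : e + k = 0
        · refine ⟨L, hc.tail, fun x hx => h0 x (List.mem_cons_of_mem _ hx), ?_⟩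
          simp [← mul_assoc, ← zpow_add, hs]
        · refine ⟨(i, e + k) :: L, ?_, ?_, ?_⟩
          · rw [List.isChain_cons] at hc ⊢
            exact hc
          · intro x hx
            rcases List.mem_cons.1 hx with rfl | hx
            · exact hs
            · exact h0 x (List.mem_cons_of_mem _ hx)
          · simp [← mul_assoc, ← zpow_add]
      · refine ⟨(i, e) :: (j, k) :: L, ?_, ?_, ?_⟩
        · exact List.isChain_cons_cons.2 ⟨hij, hc⟩
        · intro x hx
          rcases List.mem_cons.1 hx with rfl | hx
          · exact he
          · exact h0 x hx
        · simp
  have main : ∀ w v : FreeGroup α,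
      (∃ L : List (α × ℤ), L.IsChain (fun x y => x.1 ≠ y.1) ∧ (∀ x ∈ L, x.2 ≠ 0) ∧
        (L.map fun x => FreeGroup.of x.1 ^ x.2).prod = v) →
      ∃ L : List (α × ℤ), L.IsChain (fun x y => x.1 ≠ y.1) ∧ (∀ x ∈ L, x.2 ≠ 0) ∧
        (L.map fun x => FreeGroup.of x.1 ^ x.2).prod = w * v := by
    intro w
    induction w using FreeGroup.induction_on with
    | C1 => intro v hv; simpa using hv
    | of i => intro v hv; simpa using key i 1 v hv
    | inv_of i _ => intro v hv; simpa using key i (-1) v hv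
    | mul x y hx hy => intro v hv; simpa [mul_assoc] using hx _ (hy _ hv)
  simpa using main w 1 ⟨[], by simp, by simp, by simp⟩

/-- The matrix with an entry `1` in each position `(a, a + 1)` for which the `a`-th label in `p`
is `i`, and zeros elsewhere. -/
noncomputable def stepMat {α : Type*} (p : ℕ → Option α) (N : ℕ) (i : α) :
    Matrix (Fin N) (Fin N) ℤ :=
  Matrix.of fun a b => if a.val + 1 = b.val ∧ p a.val = some i then 1 else 0

theorem stepMat_mul_apply {α : Type*} (p : ℕ → Option α) (N : ℕ) (i : α)
    (M : Matrix (Fin N) (Fin N) ℤ) (a b : Fin N) :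
    (stepMat p N i * M) a b =
      if h : a.val + 1 < N ∧ p a.val = some i then M ⟨a.val + 1, h.1⟩ b else 0 := by
  rw [Matrix.mul_apply]
  split_ifs with h
  · rw [Finset.sum_eq_single ⟨a.val + 1, h.1⟩]
    · simp [stepMat, h.2]
    · intro c _ hc
      have : a.val + 1 ≠ c.val := fun h' => hc (Fin.ext h'.symm)
      simp [stepMat, this]
    · simp
  · refine Finset.sum_eq_zero fun c _ => ?_
    have : ¬ (a.val + 1 = c.val ∧ p a.val = some i) := fun h' => h ⟨h'.1 ▸ c.2, h'.2⟩
    simp [stepMat, this]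

theorem stepMat_mul_self {α : Type*} {p : ℕ → Option α} (hp : ∀ a i, p a = some i →
    p (a + 1) ≠ some i) (N : ℕ) (i : α) : stepMat p N i * stepMat p N i = 0 := by
  ext a b
  rw [stepMat_mul_apply]
  split_ifs with h
  · simp [stepMat, hp _ _ h.2]
  · rfl

/-- The unipotent representation of a free group sending the `i`-th generator to
`1 + stepMat p N i`. -/
noncomputable def magnus {α : Type*} (p : ℕ → Option α)
    (hp : ∀ a i, p a = some i → p (a + 1) ≠ some i) (N : ℕ) :
    FreeGroup α →* (Matrix (Fin N) (Fin N) ℤ)ˣ :=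
  FreeGroup.lift fun i =>
    ⟨1 + stepMat p N i, 1 - stepMat p N i,
      by rw [add_mul, mul_sub, mul_sub, stepMat_mul_self hp]; simp,
      by rw [sub_mul, mul_add, mul_add, stepMat_mul_self hp]; simp⟩

section
variable {α : Type*} {p : ℕ → Option α} (hp : ∀ a i, p a = some i → p (a + 1) ≠ some i) (N : ℕ)

theorem magnus_of (i : α) :
    (magnus p hp N (FreeGroup.of i) : Matrix (Fin N) (Fin N) ℤ) = 1 + stepMat p N i := by
  simp [magnus]

theorem magnus_of_inv (i : α) :
    ((magnus p hp N (FreeGroup.of i))⁻¹ : (Matrix (Fin N) (Fin N) ℤ)ˣ) =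
      (1 - stepMat p N i : Matrix (Fin N) (Fin N) ℤ) := by
  simp only [magnus, FreeGroup.lift_apply_of]; rfl

theorem magnus_of_zpow (i : α) (e : ℤ) :
    (magnus p hp N (FreeGroup.of i ^ e) : Matrix (Fin N) (Fin N) ℤ) =
      1 + e • stepMat p N i := by
  have h2 := stepMat_mul_self hp N i
  rw [map_zpow]
  induction e using Int.induction_on with
  | zero => simp
  | succ k ih =>
    rw [zpow_add_one, Units.val_mul, ih, magnus_of, add_mul, mul_add, mul_add, smul_mul_assoc,
      smul_mul_assoc, h2, add_smul]
    simp; abel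
  | pred k ih =>
    rw [zpow_sub_one, Units.val_mul, ih, magnus_of_inv, add_mul, mul_sub, mul_sub,
      smul_mul_assoc, smul_mul_assoc, h2, sub_smul]
    simp; abel

/-- A product of `k` syllables moves at most `k` steps above the diagonal. -/
theorem magnus_prod_eq_zero (L : List (α × ℤ)) (a b : Fin N) (h : a.val + L.length < b.val) :
    (magnus p hp N (L.map fun x => FreeGroup.of x.1 ^ x.2).prod :
      Matrix (Fin N) (Fin N) ℤ) a b = 0 := by
  induction L generalizing a with
  | nil =>
    have : a ≠ b := fun h' => by subst h'; simp at h
    simp [this]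
  | cons x L ih =>
    rw [List.length_cons] at h
    rw [List.map_cons, List.prod_cons, map_mul, Units.val_mul, magnus_of_zpow, add_mul, one_mul,
      smul_mul_assoc, Matrix.add_apply, Matrix.smul_apply, stepMat_mul_apply, ih a (by omega)]
    split_ifs with h'
    · rw [ih _ (by simp only []; omega)]; simp
    · simp

/-- If the labels of `p` from position `o` on spell out the syllables of a word, the entry in row
`o` and column `o + length` of its matrix is the product of the exponents. -/
theorem magnus_prod_apply (L : List (α × ℤ)) (o : ℕ) (ho : o + L.length < N)
    (hL : ∀ j (hj : j < L.length), p (o + j) = some (L[j]).1) :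
    (magnus p hp N (L.map fun x => FreeGroup.of x.1 ^ x.2).prod :
      Matrix (Fin N) (Fin N) ℤ) ⟨o, by omega⟩ ⟨o + L.length, ho⟩ = (L.map Prod.snd).prod := by
  induction L generalizing o with
  | nil => simp
  | cons x L ih =>
    have hz := magnus_prod_eq_zero hp N L ⟨o, by omega⟩ ⟨o + (x :: L).length, ho⟩ (by simp)
    simp only [List.length_cons] at ho
    have h0 : p o = some x.1 := hL 0 (by simp)
    have := ih (o + 1) (by omega) fun j hj => by
      have := hL (j + 1) (by simpa using hj)
      rw [show o + 1 + j = o + (j + 1) by ring, this]; simp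
    rw [List.map_cons, List.prod_cons, map_mul, Units.val_mul, magnus_of_zpow, add_mul, one_mul,
      smul_mul_assoc, Matrix.add_apply, Matrix.smul_apply, stepMat_mul_apply, hz,
      dif_pos ⟨by simp only []; omega, h0⟩, List.map_cons, List.prod_cons, ← this]
    simp only [List.length_cons, zero_add, smul_eq_mul,
      show o + (L.length + 1) = o + 1 + L.length by omega]

end

/-- Non-trivial elements of free groups survive in an integral unipotent representation. -/
theorem exists_magnus_ne_one {α : Type*} (w : FreeGroup α) (hw : w ≠ 1) :
    ∃ (p : ℕ → Option α) (hp : ∀ a i, p a = some i → p (a + 1) ≠ some i) (N : ℕ),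
      magnus p hp N w ≠ 1 := by
  obtain ⟨L, hc, h0, rfl⟩ := exists_syllables w
  have hL : L ≠ [] := by rintro rfl; simp at hw
  have hpos := List.length_pos_iff.2 hL
  have hp : ∀ a i, L[a]?.map Prod.fst = some i → L[a + 1]?.map Prod.fst ≠ some i := by
    intro a i h1 h2
    simp only [Option.map_eq_some_iff, List.getElem?_eq_some_iff] at h1 h2
    obtain ⟨x, ⟨ha, rfl⟩, rfl⟩ := h1
    obtain ⟨y, ⟨hb, rfl⟩, h⟩ := h2
    exact List.isChain_iff_getElem.1 hc a hb h.symm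
  refine ⟨fun a => L[a]?.map Prod.fst, hp, L.length + 1, fun h => ?_⟩
  have := magnus_prod_apply hp (L.length + 1) L 0 (by omega) fun j hj => by simp [hj]
  rw [h] at this
  have hne : (⟨0, by omega⟩ : Fin (L.length + 1)) ≠ ⟨0 + L.length, by omega⟩ := by
    intro h'
    have := congrArg Fin.val h'
    simp only [] at this
    omega
  rw [Units.val_one, Matrix.one_apply_ne hne] at this
  have h3 := List.prod_eq_zero_iff.1 this.symm
  obtain ⟨x, hx, hx0⟩ := List.mem_map.1 h3
  exact h0 x hx hx0

/-! ### Finite quotients of prescribed exponent -/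

/-- `A` vanishes strictly below the `k`-th diagonal above the main one. -/
def UpperBy {N : ℕ} {S : Type*} [Zero S] (k : ℕ) (A : Matrix (Fin N) (Fin N) S) : Prop :=
  ∀ a b : Fin N, b.val < a.val + k → A a b = 0

theorem UpperBy.mul {N : ℕ} {S : Type*} [Ring S] {j k : ℕ} {A B : Matrix (Fin N) (Fin N) S}
    (hA : UpperBy j A) (hB : UpperBy k B) : UpperBy (j + k) (A * B) := by
  intro a b hab
  rw [Matrix.mul_apply]
  refine Finset.sum_eq_zero fun c _ => ?_
  by_cases h : c.val < a.val + j
  · rw [hA a c h, zero_mul]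
  · rw [hB c b (by omega), mul_zero]

theorem UpperBy.pow {N : ℕ} {S : Type*} [Ring S] {A : Matrix (Fin N) (Fin N) S}
    (hA : UpperBy 1 A) (k : ℕ) : UpperBy k (A ^ k) := by
  induction k with
  | zero =>
    intro a b hab
    exact Matrix.one_apply_ne (by rintro rfl; simp at hab)
  | succ k ih => rw [pow_succ]; exact ih.mul hA

theorem UpperBy.mono {N : ℕ} {S : Type*} [Zero S] {j k : ℕ} (h : j ≤ k)
    {A : Matrix (Fin N) (Fin N) S} (hA : UpperBy k A) : UpperBy j A :=
  fun a b hab => hA a b (by omega)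

theorem upperBy_stepMat {α : Type*} (p : ℕ → Option α) (N : ℕ) (i : α) :
    UpperBy 1 (stepMat p N i) := by
  intro a b hab
  have : ¬ (a.val + 1 = b.val ∧ p a.val = some i) := by omega
  simp [stepMat, this]

theorem upperBy_magnus {α : Type*} {p : ℕ → Option α}
    (hp : ∀ a i, p a = some i → p (a + 1) ≠ some i) (N : ℕ) (w : FreeGroup α) :
    UpperBy 1 ((magnus p hp N w : Matrix (Fin N) (Fin N) ℤ) - 1) := by
  induction w using FreeGroup.induction_on with
  | C1 => intro a b _; simp
  | of i => rw [magnus_of, add_sub_cancel_left]; exact upperBy_stepMat p N i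
  | inv_of i _ =>
    intro a b hab
    rw [map_inv, magnus_of_inv]
    simp [upperBy_stepMat p N i a b hab]
  | mul x y hx hy =>
    intro a b hab
    have e : (magnus p hp N (x * y) : Matrix (Fin N) (Fin N) ℤ) - 1 =
        ((magnus p hp N x : Matrix (Fin N) (Fin N) ℤ) - 1) * (magnus p hp N y - 1) +
        ((magnus p hp N x : Matrix (Fin N) (Fin N) ℤ) - 1) + (magnus p hp N y - 1) := by
      rw [map_mul, Units.val_mul]; noncomm_ring
    rw [e, Matrix.add_apply, Matrix.add_apply, hx a b hab, hy a b hab,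
      (UpperBy.mono (by omega) (hx.mul hy) : UpperBy 1 _) a b hab]
    simp

/-- The binomial expansion of `(1 + A) ^ q` stops before `A ^ N = 0`, so unipotent matrices have
order dividing `q` when the binomial coefficients of `q` up to `N` vanish in `S`. -/
theorem unipotent_pow_eq_one {N : ℕ} (q : ℕ) {S : Type*} [CommRing S]
    (hS : ∀ j, 0 < j → j < N → (q.choose j : S) = 0)
    {A : Matrix (Fin N) (Fin N) S} (hA : UpperBy 1 A) : (1 + A) ^ q = 1 := by
  rw [add_comm, (Commute.one_right A).add_pow, Finset.sum_range_succ', Finset.sum_eq_zero]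
  · simp
  intro j _
  by_cases hj : j + 1 < N
  · have : ((q.choose (j + 1) : ℕ) : Matrix (Fin N) (Fin N) S) = 0 := by
      rw [← map_natCast (algebraMap S (Matrix (Fin N) (Fin N) S)), hS _ (by omega) hj, map_zero]
    rw [this, mul_zero]
  · have : A ^ (j + 1) = 0 := by
      ext a b
      exact hA.pow (j + 1) a b (by omega)
    rw [this, zero_mul, zero_mul]

/-- This follows from `q ∣ j * choose q j` and `j ∣ N !`. -/
theorem dvd_choose {q N j : ℕ} (hj : 0 < j) (hjN : j < N) :
    q / q.gcd N.factorial ∣ q.choose j := by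
  rcases Nat.eq_zero_or_pos q with rfl | hq
  · obtain ⟨k, rfl⟩ := Nat.exists_eq_succ_of_ne_zero hj.ne'
    simp
  obtain ⟨r, rfl⟩ := Nat.exists_eq_succ_of_ne_zero hq.ne'
  obtain ⟨k, rfl⟩ := Nat.exists_eq_succ_of_ne_zero hj.ne'
  have h1 : (r + 1) ∣ (r + 1).choose (k + 1) * (k + 1) := ⟨_, (Nat.add_one_mul_choose_eq r k).symm⟩
  have h2 : (r + 1) ∣ (r + 1).choose (k + 1) * N.factorial :=
    h1.trans (Nat.mul_dvd_mul_left _ (Nat.dvd_factorial hj hjN.le))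
  have hg : 0 < (r + 1).gcd N.factorial := Nat.gcd_pos_of_pos_left _ hq
  have h3 := (Nat.coprime_div_gcd_div_gcd hg)
  refine Nat.Coprime.dvd_of_dvd_mul_right h3 ?_
  rw [← Nat.mul_div_assoc _ (Nat.gcd_dvd_right _ _)]
  exact Nat.div_dvd_div (Nat.gcd_dvd_left _ _) h2

/-- A quantitative residual finiteness: for all large `q`, a given non-trivial element of a free
group survives in a finite quotient of exponent dividing `q`. -/
theorem exists_finite_quotient {α : Type} (w : FreeGroup α) (hw : w ≠ 1) :
    ∃ Q : ℕ, ∀ q, Q ≤ q → ∃ (K : Type) (_ : Group K) (_ : Finite K) (f : FreeGroup α →* K),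
      (∀ x, f x ^ q = 1) ∧ f w ≠ 1 := by
  obtain ⟨p, hp, N, hN⟩ := exists_magnus_ne_one w hw
  have : ∃ a b, (magnus p hp N w : Matrix (Fin N) (Fin N) ℤ) a b ≠
      (1 : Matrix (Fin N) (Fin N) ℤ) a b := by
    by_contra! h
    exact hN (Units.ext (Matrix.ext h))
  obtain ⟨a, b, hab⟩ := this
  set c : ℤ := (magnus p hp N w : Matrix (Fin N) (Fin N) ℤ) a b -
      (1 : Matrix (Fin N) (Fin N) ℤ) a b with hc
  have hc0 : c ≠ 0 := sub_ne_zero.2 hab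
  refine ⟨(c.natAbs + 1) * N.factorial, fun q hq => ?_⟩
  -- Reducing modulo `M` makes all `q`-th powers trivial, while `M > |c|` keeps the image of `w`
  -- non-trivial.
  set M := q / q.gcd N.factorial with hM
  have hqpos : 0 < q := lt_of_lt_of_le (Nat.mul_pos (by omega) N.factorial_pos) hq
  have hMc : c.natAbs < M := by
    rw [hM, ← Nat.succ_le_iff, Nat.le_div_iff_mul_le (Nat.gcd_pos_of_pos_left _ hqpos)]
    exact (Nat.mul_le_mul_left _ (Nat.gcd_le_right _ N.factorial_pos)).trans hq
  have hMne : NeZero M := ⟨by omega⟩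
  let ρ : Matrix (Fin N) (Fin N) ℤ →+* Matrix (Fin N) (Fin N) (ZMod M) :=
    (Int.castRingHom (ZMod M)).mapMatrix
  refine ⟨(Matrix (Fin N) (Fin N) (ZMod M))ˣ, inferInstance, inferInstance,
    (Units.map ρ.toMonoidHom).comp (magnus p hp N), fun x => ?_, fun h => ?_⟩
  · apply Units.ext
    have hx := upperBy_magnus hp N x
    have hA : UpperBy 1 (ρ ((magnus p hp N x : Matrix (Fin N) (Fin N) ℤ) - 1)) := by
      intro a b hab
      have := hx a b hab
      simp only [ρ, RingHom.mapMatrix_apply, Matrix.map_apply, this, map_zero]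
    have := unipotent_pow_eq_one q (fun j hj hjN => by
      rw [ZMod.natCast_eq_zero_iff]; exact dvd_choose hj hjN) hA
    rw [map_sub, map_one, add_sub_cancel] at this
    simpa using this
  · have h1 : ρ (magnus p hp N w : Matrix (Fin N) (Fin N) ℤ) = 1 := congrArg Units.val h
    have h2 : ρ ((magnus p hp N w : Matrix (Fin N) (Fin N) ℤ) - 1) = 0 := by
      rw [map_sub, h1, map_one, sub_self]
    have h3 : ((c : ℤ) : ZMod M) = 0 := by
      have := congrFun (congrFun h2 a) b
      simpa [ρ, hc] using this
    rw [ZMod.intCast_zmod_eq_zero_iff_dvd] at h3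
    have := Nat.le_of_dvd (by omega) (Int.natCast_dvd.1 h3)
    omega

/-! ### Derivations and the upper bound for the residual deficiency -/

/-- The universal derivation of a free group with values in a representation `ρ`: `D x` sends a
family `v` of vectors to the value at `x` of the derivation taking the value `v i` at the `i`-th
generator. -/
theorem exists_derivation {α V : Type*} [AddCommGroup V] [Module ℚ V]
    (ρ : FreeGroup α →* (V →ₗ[ℚ] V)) :
    ∃ D : FreeGroup α → ((α → V) →ₗ[ℚ] V),
      (∀ i, D (FreeGroup.of i) = LinearMap.proj i) ∧
      ∀ x y, D (x * y) = D x + ρ x ∘ₗ D y := by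
  have hinv : ∀ x (v : V), ρ x⁻¹ (ρ x v) = v := fun x v => by
    rw [← Module.End.mul_apply, ← map_mul]; simp
  have hinv' : ∀ x (v : V), ρ x (ρ x⁻¹ v) = v := fun x v => by
    rw [← Module.End.mul_apply, ← map_mul]; simp
  -- The generators act on the linear maps `(α → V) → V` by affine bijections; the derivation
  -- is the orbit map of `0`.
  let T : FreeGroup α →* Equiv.Perm ((α → V) →ₗ[ℚ] V) := FreeGroup.lift fun i =>
    { toFun := fun a => LinearMap.proj i + ρ (FreeGroup.of i) ∘ₗ a
      invFun := fun a => ρ (FreeGroup.of i)⁻¹ ∘ₗ (a - LinearMap.proj i)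
      left_inv := fun a => by ext1 v; simp [hinv]
      right_inv := fun a => by ext1 v; simp [hinv'] }
  have hT : ∀ i a, T (FreeGroup.of i) a = LinearMap.proj i + ρ (FreeGroup.of i) ∘ₗ a := by
    intro i a; simp [T]
  have key : ∀ x a, T x a = T x 0 + ρ x ∘ₗ a := by
    intro x
    induction x using FreeGroup.induction_on with
    | C1 => intro a; simp [Module.End.one_eq_id]
    | of i => intro a; simp [hT]
    | inv_of i _ =>
      intro a
      rw [map_inv, Equiv.Perm.inv_eq_iff_eq, hT]
      ext1 v
      have : T (FreeGroup.of i) ((T (FreeGroup.of i))⁻¹ 0) = 0 := by simp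
      rw [hT] at this
      have := LinearMap.congr_fun this v
      simp only [LinearMap.add_apply, LinearMap.comp_apply, LinearMap.zero_apply, map_add,
        hinv'] at this ⊢
      rw [← add_assoc, this, zero_add]
    | mul x y hx hy =>
      intro a
      rw [map_mul, Equiv.Perm.mul_apply, Equiv.Perm.mul_apply, hy, hx, hx (T y 0)]
      ext1 v
      simp [Module.End.mul_apply, add_assoc]
  refine ⟨fun x => T x 0, fun i => by simp [hT], fun x y => ?_⟩
  simp only [map_mul, Equiv.Perm.mul_apply]
  exact key x _

/-- The right translation action of a finite group on its rational functions. -/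
def regRep (K : Type*) [Group K] : K →* ((K → ℚ) →ₗ[ℚ] (K → ℚ)) where
  toFun x := LinearMap.funLeft ℚ ℚ (fun y => y * x)
  map_one' := by ext; simp
  map_mul' x y := by
    refine LinearMap.ext fun f => funext fun z => ?_
    simp [LinearMap.funLeft_apply, mul_assoc]

theorem regRep_apply {K : Type*} [Group K] (x : K) (f : K → ℚ) (y : K) :
    regRep K x f y = f (y * x) := rfl

/-- The functions fixed by the translation by `x`. -/
def fixedBy {K : Type*} [Group K] (x : K) : Submodule ℚ (K → ℚ) :=
  LinearMap.ker (regRep K x - 1)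

theorem mem_fixedBy {K : Type*} [Group K] (x : K) (f : K → ℚ) :
    f ∈ fixedBy x ↔ regRep K x f = f := by
  simp [fixedBy, sub_eq_zero]

/-- Functions fixed by the translation by `x` are functions on the cosets of `⟨x⟩`. -/
theorem finrank_fixedBy_mul_le {K : Type*} [Group K] [Fintype K] (x : K) :
    Module.finrank ℚ (fixedBy x) * orderOf x ≤ Fintype.card K := by
  let r : fixedBy x →ₗ[ℚ] ((K ⧸ Subgroup.zpowers x) → ℚ) :=
    (LinearMap.funLeft ℚ ℚ (Quotient.out : K ⧸ Subgroup.zpowers x → K)) ∘ₗ (fixedBy x).subtype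
  have hr : Function.Injective r := by
    rw [injective_iff_map_eq_zero]
    rintro ⟨f, hf⟩ h
    rw [mem_fixedBy] at hf
    have hpow : ∀ (k : ℕ) y, f (y * x ^ k) = f y := by
      intro k
      induction k with
      | zero => simp
      | succ k ih => intro y; rw [pow_succ, ← mul_assoc, ← regRep_apply x f, hf, ih]
    ext y
    have h1 : f (Quotient.out (QuotientGroup.mk y : K ⧸ Subgroup.zpowers x)) = 0 := congrFun h _
    obtain ⟨⟨z, hz⟩, hz'⟩ := QuotientGroup.mk_out_eq_mul (Subgroup.zpowers x) y
    obtain ⟨k, rfl⟩ := (isOfFinOrder_of_finite x).mem_powers_iff_mem_zpowers.2 hz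
    rw [hz'] at h1
    simpa [hpow] using h1
  have h1 := LinearMap.finrank_le_finrank_of_injective hr
  rw [Module.finrank_fintype_fun_eq_card] at h1
  rw [← Nat.card_zpowers, ← Nat.card_eq_fintype_card,
    Subgroup.card_eq_card_quotient_mul_card_subgroup (Subgroup.zpowers x),
    Nat.card_eq_fintype_card (α := K ⧸ Subgroup.zpowers x)]
  exact Nat.mul_le_mul_right _ h1

/-- Counting derivations into the regular representation of a finite quotient: a presentation on
`n` generators of a `d`-generated group whose relators are powers of elements of order `k_i` in
some finite quotient satisfies `n - ∑ 1 / k_i ≤ d`. -/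
theorem rank_sub_le {n s d : ℕ} {G K : Type*} [Group G] [Group K] [Finite K]
    (u : Fin s → FreeGroup (Fin n)) (m : Fin s → ℕ) (φ : FreeGroup (Fin n) →* G)
    (hφ : Function.Surjective φ)
    (hker : φ.ker = Subgroup.normalClosure (Set.range fun i => u i ^ m i))
    (ψ : FreeGroup (Fin d) →* G) (hψ : Function.Surjective ψ) (π : G →* K) :
    (n : ℝ) - ∑ i, ((orderOf (π (φ (u i))) : ℝ))⁻¹ ≤ d := by
  have := Fintype.ofFinite K
  let σ : FreeGroup (Fin n) →* ((K → ℚ) →ₗ[ℚ] (K → ℚ)) := (regRep K).comp (π.comp φ)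
  obtain ⟨D, hD, hmul⟩ := exists_derivation σ
  choose y hy using fun j : Fin d => hφ (ψ (FreeGroup.of j))
  have hD1 : D 1 = 0 := by simpa [Module.End.one_eq_id] using hmul 1 1
  have hrel : ∀ i, u i ^ m i ∈ φ.ker := fun i => by
    rw [hker]; exact Subgroup.subset_normalClosure ⟨i, rfl⟩
  have hσ : ∀ x ∈ φ.ker, σ x = 1 := fun x hx => by simp [σ, MonoidHom.mem_ker.1 hx]
  -- The derivative of a power of `u` that acts trivially is fixed by `u`.
  have hfix : ∀ i v, D (u i ^ m i) v ∈ fixedBy (π (φ (u i))) := by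
    intro i v
    have h1 := LinearMap.congr_fun (hmul (u i) (u i ^ m i)) v
    have h2 := LinearMap.congr_fun (hmul (u i ^ m i) (u i)) v
    rw [← pow_succ', pow_succ, h2, hσ _ (hrel i)] at h1
    rw [mem_fixedBy]
    simp only [LinearMap.add_apply, LinearMap.comp_apply, Module.End.one_apply] at h1
    rw [add_comm] at h1
    exact (add_left_cancel h1).symm
  -- A derivation of the free group that vanishes on the relators and on lifts `y` of generators
  -- of `G` vanishes identically; comparing dimensions gives the bound.
  let Φ : (Fin n → (K → ℚ)) →ₗ[ℚ]
      (Fin d → (K → ℚ)) × (∀ i, fixedBy (π (φ (u i)))) :=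
    (LinearMap.pi fun j => D (y j)).prod
      (LinearMap.pi fun i => (D (u i ^ m i)).codRestrict _ (hfix i))
  have hΦ : Function.Injective Φ := by
    rw [injective_iff_map_eq_zero]
    intro v hv
    have hv1 : ∀ j, D (y j) v = 0 := fun j => congrFun (congrArg Prod.fst hv) j
    have hv2 : ∀ i, D (u i ^ m i) v = 0 := fun i =>
      congrArg Subtype.val (congrFun (congrArg Prod.snd hv) i)
    have hinv : ∀ x, D x⁻¹ v = - σ x⁻¹ (D x v) := fun x => by
      have := LinearMap.congr_fun (hmul x⁻¹ x) v
      simp only [inv_mul_cancel, hD1, LinearMap.zero_apply, LinearMap.add_apply,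
        LinearMap.comp_apply] at this
      exact eq_neg_of_add_eq_zero_left this.symm
    let S : Subgroup (FreeGroup (Fin n)) :=
      { carrier := {x | D x v = 0}
        one_mem' := by simp [hD1]
        mul_mem' := fun {a b} (ha : D a v = 0) (hb : D b v = 0) => by simp [hmul, ha, hb]
        inv_mem' := fun {a} (ha : D a v = 0) => by simp [hinv, ha] }
    have hS : ∀ x, x ∈ S ↔ D x v = 0 := fun x => Iff.rfl
    have hnorm : (S ⊓ φ.ker).Normal := by
      refine ⟨fun r hr g => ⟨?_, φ.normal_ker.conj_mem r hr.2 g⟩⟩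
      have h0 : D r v = 0 := hr.1
      have h2 := LinearMap.congr_fun (hmul g g⁻¹) v
      change D _ v = 0
      simp only [mul_inv_cancel, hD1, LinearMap.zero_apply, LinearMap.add_apply,
        LinearMap.comp_apply] at h2
      simp [hmul, h0, hσ r hr.2, ← h2]
    have hkerS : φ.ker ≤ S := by
      have : φ.ker ≤ S ⊓ φ.ker := by
        nth_rewrite 1 [hker]
        apply Subgroup.normalClosure_le_normal
        rintro _ ⟨i, rfl⟩
        exact ⟨hv2 i, hrel i⟩
      exact this.trans inf_le_left
    have hall : ∀ x, x ∈ S := by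
      intro x
      obtain ⟨z, hz⟩ := hψ (φ x)
      have h1 : φ (FreeGroup.lift y z) = ψ z := by
        have : φ.comp (FreeGroup.lift y) = ψ := by
          ext j; simp [hy]
        exact DFunLike.congr_fun this z
      have h2 : FreeGroup.lift y z ∈ S := by
        have : (FreeGroup.lift y).range ≤ S := by
          rw [FreeGroup.range_lift_eq_closure, Subgroup.closure_le]
          rintro _ ⟨j, rfl⟩
          exact hv1 j
        exact this ⟨z, rfl⟩
      have h3 : (FreeGroup.lift y z)⁻¹ * x ∈ φ.ker := by
        rw [MonoidHom.mem_ker, map_mul, map_inv, h1, hz, inv_mul_cancel]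
      simpa using S.mul_mem h2 (hkerS h3)
    funext i
    have := (hS _).1 (hall (FreeGroup.of i))
    rwa [hD] at this
  have hdim := LinearMap.finrank_le_finrank_of_injective hΦ
  rw [Module.finrank_prod] at hdim
  simp only [Module.finrank_pi_fintype, Module.finrank_self, mul_one, Finset.sum_const,
    Finset.card_univ,
    Fintype.card_fin, smul_eq_mul] at hdim
  set h : ℝ := (Fintype.card K : ℝ) with hh
  have hpos : 0 < h := by rw [hh]; exact_mod_cast Fintype.card_pos
  have hterm : ∀ i, (Module.finrank ℚ (fixedBy (π (φ (u i)))) : ℝ) ≤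
      h * ((orderOf (π (φ (u i))) : ℝ))⁻¹ := by
    intro i
    rw [← div_eq_mul_inv, le_div_iff₀ (by exact_mod_cast orderOf_pos _)]
    rw [hh]
    exact_mod_cast finrank_fixedBy_mul_le (π (φ (u i)))
  have hdim' : (n : ℝ) * h ≤ d * h + ∑ i, h * ((orderOf (π (φ (u i))) : ℝ))⁻¹ := by
    refine le_trans ?_ (add_le_add_right (Finset.sum_le_sum fun i _ => hterm i) _)
    rw [hh]
    exact_mod_cast hdim
  rw [← Finset.mul_sum] at hdim'
  nlinarith

/-! ### Roots in free groups -/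

/-- A non-trivial element of a free group is a `q`-th power for only finitely many `q`: it survives
in a quotient in which, for large `q`, all `q`-th powers die. -/
theorem exists_bound_of_eq_pow {α : Type} (w : FreeGroup α) (hw : w ≠ 1) :
    ∃ Q : ℕ, ∀ (v : FreeGroup α) (k : ℕ), w = v ^ k → k < Q := by
  obtain ⟨Q, hQ⟩ := exists_finite_quotient w hw
  refine ⟨Q, fun v k hk => ?_⟩
  by_contra! h
  obtain ⟨K, _, _, f, hf, hfw⟩ := hQ k h
  exact hfw (by rw [hk, map_pow, hf])

theorem pow_ne_one_of_ne_one {α : Type} (w : FreeGroup α) (hw : w ≠ 1) {k : ℕ} (hk : 0 < k) :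
    w ^ k ≠ 1 := by
  intro h
  obtain ⟨Q, hQ⟩ := exists_bound_of_eq_pow w hw
  -- If `w ^ k = 1` then `w` is its own `(1 + k * Q)`-th power.
  have := hQ w (1 + k * Q) (by rw [pow_add, pow_mul, h]; simp)
  nlinarith

/-- Every non-trivial element has a root that is not a proper power: one of largest exponent. -/
theorem exists_root {α : Type} (w : FreeGroup α) (hw : w ≠ 1) :
    ∃ (u : FreeGroup α) (e : ℕ), 1 ≤ e ∧ u ≠ 1 ∧ NotProperPower u ∧ w = u ^ e := by
  obtain ⟨Q, hQ⟩ := exists_bound_of_eq_pow w hw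
  have hex : ∃ k, ∃ v, w = v ^ k := ⟨1, w, by simp⟩
  have hle : ∀ k, (∃ v, w = v ^ k) → k ≤ Q := fun k ⟨v, hv⟩ => (hQ v k hv).le
  set e := Nat.findGreatest (fun k => ∃ v, w = v ^ k) Q with he
  have hspec : ∃ v, w = v ^ e :=
    Nat.findGreatest_spec (P := fun k => ∃ v, w = v ^ k) (hle 1 ⟨w, by simp⟩) ⟨w, by simp⟩
  have hmax : ∀ k, (∃ v, w = v ^ k) → k ≤ e := fun k hk => Nat.le_findGreatest (hle k hk) hk
  have he1 : 1 ≤ e := hmax 1 ⟨w, by simp⟩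
  obtain ⟨u, hu⟩ := hspec
  have hu1 : u ≠ 1 := by rintro rfl; simp at hu; exact hw hu
  refine ⟨u, e, he1, hu1, fun v k hk => ?_, hu⟩
  rcases Nat.eq_zero_or_pos k with rfl | hkpos
  · exact absurd (by simpa using hk) hu1
  have := hmax (k * e) ⟨v, by rw [hu, hk, pow_mul]⟩
  nlinarith

/-! ### Orders modulo the finite residual -/

theorem orderIn_le {Γ : Type*} [Group Γ] (H : Subgroup Γ) (x : Γ) {j : ℕ} (hj : 0 < j)
    (h : x ^ j ∈ H) : orderIn H x ≤ j :=
  Nat.sInf_le ⟨hj, h⟩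

theorem orderIn_spec {Γ : Type*} [Group Γ] (H : Subgroup Γ) (x : Γ) {j : ℕ} (hj : 0 < j)
    (h : x ^ j ∈ H) : 0 < orderIn H x ∧ x ^ orderIn H x ∈ H :=
  Nat.sInf_mem (s := {j : ℕ | 0 < j ∧ x ^ j ∈ H}) ⟨j, hj, h⟩

/-- Finitely many elements attain their orders modulo the finite residual in a common finite
quotient. -/
theorem exists_finite_index_order {Γ : Type*} [Group Γ] {s : ℕ} (x : Fin s → Γ) :
    ∃ N : Subgroup Γ, N.Normal ∧ N.FiniteIndex ∧
      ∀ i j, 0 < j → x i ^ j ∈ N → orderIn (finiteResidual Γ) (x i) ≤ j := by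
  have hex : ∀ z : Γ, ∃ H : Subgroup Γ, H.FiniteIndex ∧ (z ∈ H → z ∈ finiteResidual Γ) := by
    intro z
    by_cases hz : z ∈ finiteResidual Γ
    · exact ⟨⊤, inferInstance, fun _ => hz⟩
    · have hz' := hz
      simp only [finiteResidual, Subgroup.mem_iInf, not_forall] at hz'
      obtain ⟨H, hH, hzH⟩ := hz'
      exact ⟨H, ⟨hH⟩, fun h => absurd h hzH⟩
  choose H hH hHz using hex
  let N : Subgroup Γ := ⨅ t : Σ i, Fin (orderIn (finiteResidual Γ) (x i)), H (x t.1 ^ (t.2 : ℕ))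
  have hN : N.FiniteIndex := Subgroup.finiteIndex_iInf fun _ => hH _
  refine ⟨N.normalCore, inferInstance, inferInstance, fun i j hj hmem => ?_⟩
  by_contra! hlt
  have h1 := Subgroup.mem_iInf.1 (N.normalCore_le hmem) ⟨i, ⟨j, hlt⟩⟩
  exact absurd (orderIn_le _ _ hj (hHz _ h1)) hlt.not_ge

/-- The residual deficiency of a presentation of a group is at most the rank of the group. -/
theorem rdef_le {n s d : ℕ} {Γ : Type*} [Group Γ]
    (u : Fin s → FreeGroup (Fin n)) (m : Fin s → ℕ) (hm : ∀ i, 1 ≤ m i)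
    (φ : FreeGroup (Fin n) →* Γ) (hφ : Function.Surjective φ)
    (hker : φ.ker = Subgroup.normalClosure (Set.range fun i => u i ^ m i))
    (ψ : FreeGroup (Fin d) →* Γ) (hψ : Function.Surjective ψ) :
    (n : ℝ) - ∑ i, ((orderIn (finiteResidual Γ) (φ (u i)) : ℝ))⁻¹ ≤ d := by
  obtain ⟨N, hN, hfin, hord⟩ := exists_finite_index_order fun i => φ (u i)
  refine le_trans (sub_le_sub_left (Finset.sum_le_sum fun i _ => ?_) _)
    (rank_sub_le u m φ hφ hker ψ hψ (QuotientGroup.mk' N))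
  have hrel : φ (u i) ^ m i = 1 := by
    rw [← map_pow, ← MonoidHom.mem_ker, hker]
    exact Subgroup.subset_normalClosure ⟨i, rfl⟩
  have hpos := (orderIn_spec (finiteResidual Γ) (φ (u i)) (hm i)
    (by rw [hrel]; exact one_mem _)).1
  apply inv_anti₀ (by exact_mod_cast hpos)
  have hmem : φ (u i) ^ orderOf (QuotientGroup.mk' N (φ (u i))) ∈ N := by
    rw [← QuotientGroup.eq_one_iff]
    exact pow_orderOf_eq_one (QuotientGroup.mk' N (φ (u i)))
  exact_mod_cast hord i _ (orderOf_pos _) hmem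

/-- For large `q`, the image of a non-trivial element of a free group lies outside the finite
residual of any quotient by `q`-th powers. -/
theorem exists_notMem_finiteResidual {α : Type} (w : FreeGroup α) (hw : w ≠ 1) :
    ∃ Q : ℕ, ∀ q, Q ≤ q → ∀ {m : ℕ} (g : Fin m → FreeGroup α),
      (QuotientGroup.mk w : FreeGroup α ⧸ Subgroup.normalClosure (Set.range fun i => g i ^ q)) ∉
        finiteResidual (FreeGroup α ⧸ Subgroup.normalClosure (Set.range fun i => g i ^ q)) := by
  obtain ⟨Q, hQ⟩ := exists_finite_quotient w hw
  refine ⟨Q, fun q hq m g hmem => ?_⟩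
  obtain ⟨K, _, _, f, hf, hfw⟩ := hQ q hq
  have hle : Subgroup.normalClosure (Set.range fun i => g i ^ q) ≤ f.ker := by
    apply Subgroup.normalClosure_le_normal
    rintro _ ⟨i, rfl⟩
    simp [MonoidHom.mem_ker, hf]
  let F := QuotientGroup.lift _ f hle
  have hF : F.ker.index ≠ 0 := Subgroup.FiniteIndex.index_ne_zero
  have h1 := Subgroup.mem_iInf.1 (Subgroup.mem_iInf.1 hmem F.ker) hF
  exact hfw h1

/-- for non-trivial elements `g₁, …, g_m` of a free group of rank
`d ≥ 2`, the quotient by the normal closure of the `q`-th powers has residual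
deficiency greater than one for all but finitely many `q`. -/
theorem statement18 (d : ℕ) (hd : 2 ≤ d) (m : ℕ) (g : Fin m → FreeGroup (Fin d))
    (hg1 : ∀ i, g i ≠ 1) :
    {q : ℕ | ¬ 1 < rdef (FreeGroup (Fin d) ⧸
        Subgroup.normalClosure (Set.range fun i => g i ^ q))}.Finite := by
  choose u e he hu1 hu hgu using fun i => exists_root (g i) (hg1 i)
  -- For `q` beyond all these bounds, each `u i` has order larger than `m` modulo the finite residual.
  choose Q hQ using fun t : Fin m × Fin m => exists_notMem_finiteResidual
    (u t.1 ^ (t.2.val + 1)) (pow_ne_one_of_ne_one _ (hu1 t.1) (Nat.succ_pos _))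
  refine (Set.finite_lt_nat (∑ t, Q t + 1)).subset fun q hq => ?_
  by_contra hlt
  simp only [Set.mem_ofPred_eq, not_lt] at hlt
  refine hq ?_
  have hQq : ∀ t, Q t ≤ q := fun t => by
    have := Finset.single_le_sum (f := Q) (fun _ _ => Nat.zero_le _) (Finset.mem_univ t)
    omega
  set R := Subgroup.normalClosure (Set.range fun i => g i ^ q) with hR
  have hpow : (fun i => u i ^ (e i * q)) = fun i => g i ^ q := by
    funext i; rw [hgu i, pow_mul]
  have hpos : ∀ i, 1 ≤ e i * q := fun i => Nat.mul_pos (he i) (by omega)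
  have hsurj := QuotientGroup.mk'_surjective R
  refine lt_csSup_of_lt (a := (d : ℝ) - ∑ i,
    ((orderIn (finiteResidual (FreeGroup (Fin d) ⧸ R)) (QuotientGroup.mk' R (u i)) : ℝ))⁻¹)
    (show BddAbove _ from ⟨d, ?_⟩)
    ⟨d, m, u, fun i => e i * q, QuotientGroup.mk' R, hpos, hu, hsurj, ?_, rfl⟩ ?_
  · rintro x ⟨n, s, u', m', φ, hm', -, hφ, hker, rfl⟩
    exact rdef_le u' m' hm' φ hφ hker (QuotientGroup.mk' R) hsurj
  · rw [QuotientGroup.ker_mk', hpow]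
  · have hterm : ∀ i, ((orderIn (finiteResidual (FreeGroup (Fin d) ⧸ R))
        (QuotientGroup.mk' R (u i)) : ℝ))⁻¹ ≤ ((m : ℝ) + 1)⁻¹ := by
      intro i
      have hmem : u i ^ (e i * q) ∈ R := by
        rw [congrFun hpow i]
        exact Subgroup.subset_normalClosure ⟨i, rfl⟩
      have hone : (QuotientGroup.mk' R (u i)) ^ (e i * q) = 1 := by
        rw [← map_pow]
        exact (QuotientGroup.eq_one_iff _).2 hmem
      obtain ⟨hk0, hk⟩ := orderIn_spec (finiteResidual (FreeGroup (Fin d) ⧸ R))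
        (QuotientGroup.mk' R (u i)) (hpos i) (by rw [hone]; exact one_mem _)
      have hge : m + 1 ≤ orderIn (finiteResidual (FreeGroup (Fin d) ⧸ R))
          (QuotientGroup.mk' R (u i)) := by
        by_contra! hlt'
        set k := orderIn (finiteResidual (FreeGroup (Fin d) ⧸ R)) (QuotientGroup.mk' R (u i))
        refine hQ (i, ⟨k - 1, by omega⟩) q (hQq _) g ?_
        rw [← map_pow] at hk
        simp only [Nat.sub_add_cancel hk0]
        exact hk
      exact inv_anti₀ (by positivity) (by exact_mod_cast hge)
    have hsum := Finset.sum_le_sum fun i (_ : i ∈ Finset.univ) => hterm i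
    rw [Finset.sum_const, Finset.card_univ, Fintype.card_fin, nsmul_eq_mul] at hsum
    have hlt1 : (m : ℝ) * ((m : ℝ) + 1)⁻¹ < 1 := by
      rw [← div_eq_mul_inv, div_lt_one (by positivity)]; linarith
    have hd' : (2 : ℝ) ≤ d := by exact_mod_cast hd
    linarith

end ResDef
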